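/- Let N ≥ 3, let V satisfy condition (V) and the decay condition that there exist A, α > 0 with V⁺(x) ≤ A|x|^{-2-α} for all x ∈ ℝ^N, let f satisfy conditions (f1), (f2), (f3), let λ > 0, and let u be a solution of problem (P_λ). Then the functions x ↦ V⁺(x)u(x), x ↦ V⁻(x)u(x) and x ↦ f(u(x)) are all integrable on ℝ^N (belong to L¹(ℝ^N)). -/

import Mathlib

open MeasureTheory Filter Metric Set
open scoped ENNReal NNReal Topology

noncomputable section

/-- Euclidean space `ℝ^N`. -/
abbrev Euc (N : ℕ) := EuclideanSpace ℝ (Fin N)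

/-- The Laplace operator on `ℝ^N`: the sum of the second partial derivatives. -/
def lap (N : ℕ) (u : Euc N → ℝ) (x : Euc N) : ℝ :=
  ∑ i : Fin N,
    fderiv ℝ (fun y => fderiv ℝ u y (EuclideanSpace.single i 1)) x (EuclideanSpace.single i 1)

/-- The principal eigenvalue `λ₁(R)`: the infimum of `∫_{B_R} |∇u|²` over smooth functions
compactly supported in the open ball `B_R` with `∫_{B_R} V u² = 1`. -/
def lam1 (N : ℕ) (V : Euc N → ℝ) (R : ℝ) : ℝ :=
  sInf { t : ℝ | ∃ u : Euc N → ℝ, ContDiff ℝ (⊤ : ℕ∞) u ∧ HasCompactSupport u ∧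
    tsupport u ⊆ ball (0 : Euc N) R ∧
    (∫ x, V x * u x ^ 2) = 1 ∧ t = ∫ x, ‖gradient u x‖ ^ 2 }

/-- `Λ := lim_{R → ∞} λ₁(R)`. -/
def Lam (N : ℕ) (V : Euc N → ℝ) : ℝ := limUnder atTop (lam1 N V)

/-- Condition (V): `V` is a bounded Hölder-continuous function whose positive part
`V⁺ = max(V, 0)` is nontrivial and decomposes as `V₁ + V₂` with `V₁ ∈ L^{N/2}` and
`|x|² V₂(x) → 0` as `|x| → ∞`. -/
def CondV (N : ℕ) (V V₁ V₂ : Euc N → ℝ) : Prop :=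
  (∃ C β : ℝ≥0, 0 < β ∧ β ≤ 1 ∧ HolderWith C β V) ∧
  (∃ C : ℝ, ∀ x, |V x| ≤ C) ∧
  (∃ x, 0 < V x) ∧
  (∀ x, max (V x) 0 = V₁ x + V₂ x) ∧
  MemLp V₁ ((N : ℝ≥0∞) / 2) volume ∧
  Tendsto (fun x : Euc N => ‖x‖ ^ 2 * V₂ x) (cocompact _) (𝓝 0)

/-- The decay condition: `V⁺(x) ≤ A |x|^{-2-α}`. -/
def CondVDecay (N : ℕ) (V : Euc N → ℝ) : Prop :=
  ∃ A α : ℝ, 0 < A ∧ 0 < α ∧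
    ∀ x : Euc N, x ≠ 0 → max (V x) 0 ≤ A * ‖x‖ ^ (-2 - α)

/-- Conditions (f1), (f2), (f3) on the absorption term `f`. -/
def CondF (N : ℕ) (V : Euc N → ℝ) (f : ℝ → ℝ) : Prop :=
  ContDiff ℝ 1 f ∧ (∀ u : ℝ, 0 ≤ u → 0 ≤ f u) ∧
  -- (f1)
  f 0 = 0 ∧ deriv f 0 = 0 ∧
  0 < Filter.liminf (fun u : ℝ => ((deriv f u / u : ℝ) : EReal)) (𝓝[>] (0 : ℝ)) ∧
  -- (f2)
  StrictMonoOn (fun u : ℝ => f u / u) (Ioi 0) ∧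
  -- (f3)
  (∃ L : EReal, Tendsto (fun u : ℝ => ((f u / u : ℝ) : EReal)) atTop (𝓝 L) ∧
    ((⨆ x, |V x| : ℝ) : EReal) < L)

/-- A solution of problem `(P_λ)`: a positive `C²` function solving the logistic equation
and decaying to zero at infinity. -/
structure IsSolution (N : ℕ) (V : Euc N → ℝ) (f : ℝ → ℝ) (lam : ℝ) (u : Euc N → ℝ) : Prop where
  smooth : ContDiff ℝ 2 u
  pos : ∀ x, 0 < u x
  eqn : ∀ x, -lap N u x = lam * (V x * u x - f (u x))
  decay : Tendsto u (cocompact (Euc N)) (𝓝 0)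

/-- The surface integral `∫_{∂B_R} g dσ` over the sphere of radius `R`, written in polar
coordinates with respect to the canonical surface measure on the unit sphere. -/
def sphereInt (N : ℕ) (g : Euc N → ℝ) (R : ℝ) : ℝ :=
  ∫ ω : sphere (0 : Euc N) 1, g (R • (ω : Euc N)) * R ^ (N - 1)
    ∂((volume : Measure (Euc N)).toSphere)

/-!
The equation gives `-Δ u ≤ lam V⁺ u`, where `V⁺` decays like `|x|^(-2-α)`. Outside a large ball
`|x|^(2-N) - |x|^(2-N-γ)` is a supersolution of the same inequality, and the comparison principle,
applied to quotients by the strict supersolution `1 + |x|^(-γ)`, gives `u = O(|x|^(2-N))`. In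
particular `V⁺ u = O(|x|^(-N-α))` is integrable.

Testing the equation against a cutoff `φ(x/R)`, the term `∫ Δ(φ(·/R)) u` lives on an annulus of
volume of order `R^N`, where the integrand is `O(R^(-2) R^(2-N))`, so it stays bounded. Since
`Δ u + lam V⁺ u = lam (V⁻ u + f(u)) ≥ 0`, monotone convergence makes `V⁻ u + f(u)` integrable, and
both summands are nonnegative.
-/

section LocalMax

theorem deriv_deriv_nonpos_of_isLocalMax {f : ℝ → ℝ} {a : ℝ} (hf : ContinuousAt f a)
    (hmax : IsLocalMax f a) : deriv (deriv f) a ≤ 0 := by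
  by_contra! hpos
  have hmin : IsLocalMin f a := isLocalMin_of_deriv_deriv_pos hpos hmax.deriv_eq_zero hf
  have hconst : f =ᶠ[𝓝 a] fun _ => f a := by
    filter_upwards [hmax, hmin] with t h₁ h₂ using le_antisymm h₁ h₂
  have hzero : deriv (deriv f) a = 0 := by
    rw [hconst.deriv.deriv_eq]
    simp
  exact hpos.ne' hzero

theorem fderiv_fderiv_nonpos_of_isLocalMax {E : Type*} [NormedAddCommGroup E] [NormedSpace ℝ E]
    {f : E → ℝ} {x : E} (hf : ContDiffAt ℝ 2 f x) (hmax : IsLocalMax f x) (v : E) :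
    fderiv ℝ (fun y => fderiv ℝ f y v) x v ≤ 0 := by
  set line : ℝ → E := fun t => x + t • v with line_def
  have line_zero : line 0 = x := by simp [line_def]
  have hline (t : ℝ) : HasDerivAt line v t := by
    have hsmul := (hasDerivAt_id t).smul_const v
    rw [one_smul] at hsmul
    exact hsmul.const_add x
  have hcont : ContinuousAt line 0 := (hline 0).continuousAt
  rw [← line_zero] at hf hmax ⊢
  have hderiv : deriv (f ∘ line) =ᶠ[𝓝 0] fun t => fderiv ℝ f (line t) v := by
    filter_upwards [hcont.eventually (hf.eventually (by simp))] with t ht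
    exact ((ht.differentiableAt (by norm_num)).hasFDerivAt.comp_hasDerivAt t (hline t)).deriv
  have hdiff : DifferentiableAt ℝ (fun y => fderiv ℝ f y v) (line 0) :=
    ((hf.fderiv_right (m := 1) (by norm_num)).differentiableAt (by norm_num)).clm_apply
      (differentiableAt_const v)
  have hsecond : deriv (deriv (f ∘ line)) 0 = fderiv ℝ (fun y => fderiv ℝ f y v) (line 0) v := by
    rw [hderiv.deriv_eq]
    exact (hdiff.hasFDerivAt.comp_hasDerivAt 0 (hline 0)).deriv
  rw [← hsecond]
  exact deriv_deriv_nonpos_of_isLocalMax (hf.continuousAt.comp hcont)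
    (hmax.comp_continuous hcont)

end LocalMax

section Laplacian

open InnerProductSpace
open scoped Laplacian

variable {E : Type*} [NormedAddCommGroup E] [InnerProductSpace ℝ E] [FiniteDimensional ℝ E]
  {f : E → ℝ} {x : E}

theorem laplacian_eq_sum_fderiv_fderiv {ι : Type*} [Fintype ι] (b : OrthonormalBasis ι ℝ E)
    (hf : ContDiffAt ℝ 2 f x) :
    Δ f x = ∑ i, fderiv ℝ (fun y => fderiv ℝ f y (b i)) x (b i) := by
  have hdiff : DifferentiableAt ℝ (fderiv ℝ f) x :=
    (hf.fderiv_right (m := 1) (by norm_num)).differentiableAt (by norm_num)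
  rw [laplacian_eq_iteratedFDeriv_orthonormalBasis f b]
  refine Finset.sum_congr rfl fun i _ => ?_
  simp [iteratedFDeriv_two_apply, fderiv_clm_apply hdiff (differentiableAt_const _)]

theorem laplacian_nonpos_of_isLocalMax (hf : ContDiffAt ℝ 2 f x) (hmax : IsLocalMax f x) :
    Δ f x ≤ 0 := by
  rw [laplacian_eq_sum_fderiv_fderiv (stdOrthonormalBasis ℝ E) hf]
  exact Finset.sum_nonpos fun i _ => fderiv_fderiv_nonpos_of_isLocalMax hf hmax _

theorem continuous_laplacian (hf : ContDiff ℝ 2 f) : Continuous (Δ f) := by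
  rw [laplacian_eq_iteratedFDeriv_stdOrthonormalBasis]
  exact continuous_finsetSum _ fun i _ =>
    (hf.continuous_iteratedFDeriv le_rfl).eval continuous_const

theorem hasCompactSupport_laplacian (hf : HasCompactSupport f) : HasCompactSupport (Δ f) := by
  refine (hf.iteratedFDeriv (𝕜 := ℝ) 2).mono fun x hx => ?_
  contrapose! hx
  simp_all [laplacian_eq_iteratedFDeriv_stdOrthonormalBasis]

theorem laplacian_comp_const_smul (c : ℝ) (hf : ContDiff ℝ 2 f) :
    Δ (fun y => f (c • y)) = fun x => c ^ 2 * Δ f (c • x) := by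
  ext x
  simp only [laplacian_eq_iteratedFDeriv_stdOrthonormalBasis,
    iteratedFDeriv_comp_const_smul c hf, smul_apply, smul_eq_mul, Finset.mul_sum]

theorem laplacian_add_const_smul {v w : E → ℝ} (c : ℝ) (hv : ContDiffAt ℝ 2 v x)
    (hw : ContDiffAt ℝ 2 w x) : Δ (v + c • w) x = Δ v x + c * Δ w x := by
  have hcw : ContDiffAt ℝ 2 (c • w) x := hw.const_smul c
  rw [hv.laplacian_add hcw, laplacian_smul c hw, smul_eq_mul]

end Laplacian

section NormRpow

open Module
open scoped Laplacian

variable {E : Type*} [NormedAddCommGroup E] [InnerProductSpace ℝ E] {x : E}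

theorem contDiffAt_norm_rpow (s : ℝ) (hx : x ≠ 0) : ContDiffAt ℝ 2 (fun y : E => ‖y‖ ^ s) x :=
  (contDiffAt_norm ℝ hx).rpow_const_of_ne (norm_ne_zero_iff.2 hx)

theorem hasFDerivAt_norm_rpow_of_ne_zero (s : ℝ) (hx : x ≠ 0) :
    HasFDerivAt (fun y : E => ‖y‖ ^ s) ((s * ‖x‖ ^ (s - 2)) • innerSL ℝ x) x := by
  apply HasStrictFDerivAt.hasFDerivAt
  convert! (hasStrictFDerivAt_norm_sq x).rpow_const (p := s / 2) (by simp [hx]) using 0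
  simp_rw [← Real.rpow_natCast_mul (norm_nonneg _), ← Nat.cast_smul_eq_nsmul ℝ, smul_smul]
  ring_nf

theorem fderiv_fderiv_norm_rpow (s : ℝ) (hx : x ≠ 0) (v : E) :
    fderiv ℝ (fun y => fderiv ℝ (fun z : E => ‖z‖ ^ s) y v) x v =
      s * ‖x‖ ^ (s - 2) * ‖v‖ ^ 2 + s * (s - 2) * ‖x‖ ^ (s - 4) * inner ℝ x v ^ 2 := by
  have hfirst : (fun y => fderiv ℝ (fun z : E => ‖z‖ ^ s) y v) =ᶠ[𝓝 x]
      fun y => s * (‖y‖ ^ (s - 2) * innerSL ℝ v y) := by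
    filter_upwards [isOpen_ne.mem_nhds hx] with y hy
    simp [(hasFDerivAt_norm_rpow_of_ne_zero s hy).fderiv, real_inner_comm, mul_assoc]
  have hsecond : HasFDerivAt (fun y => s * (‖y‖ ^ (s - 2) * innerSL ℝ v y)) _ x :=
    ((hasFDerivAt_norm_rpow_of_ne_zero (s - 2) hx).mul (innerSL ℝ v).hasFDerivAt).const_mul s
  rw [hfirst.fderiv_eq, hsecond.fderiv, show s - 4 = s - 2 - 2 by ring]
  simp only [smul_apply, add_apply, innerSL_apply_apply, smul_eq_mul, real_inner_self_eq_norm_sq,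
    real_inner_comm]
  ring

variable [FiniteDimensional ℝ E]

theorem laplacian_norm_rpow (s : ℝ) (hx : x ≠ 0) :
    Δ (fun y : E => ‖y‖ ^ s) x = s * (s + finrank ℝ E - 2) * ‖x‖ ^ (s - 2) := by
  have hpow : ‖x‖ ^ (s - 2) = ‖x‖ ^ (s - 4) * ‖x‖ ^ 2 := by
    rw [← Real.rpow_add_natCast (norm_ne_zero_iff.2 hx)]
    congr 1
    push_cast
    ring
  rw [laplacian_eq_sum_fderiv_fderiv (stdOrthonormalBasis ℝ E) (contDiffAt_norm_rpow s hx)]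
  simp only [fderiv_fderiv_norm_rpow s hx, OrthonormalBasis.norm_eq_one, Finset.sum_add_distrib,
    ← Finset.mul_sum, OrthonormalBasis.sum_sq_inner_left, Finset.sum_const, Finset.card_univ,
    Fintype.card_fin, nsmul_eq_mul, hpow]
  ring

theorem eventually_const_mul_rpow_lt_const_mul_rpow {a b c c' : ℝ} (hab : a < b) (hc' : 0 < c') :
    ∀ᶠ r : ℝ in atTop, c * r ^ a < c' * r ^ b := by
  have hlim : Tendsto (fun r : ℝ => c * r ^ (-(b - a))) atTop (𝓝 0) := by
    simpa only [mul_zero] using (tendsto_rpow_neg_atTop (sub_pos.2 hab)).const_mul c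
  filter_upwards [hlim.eventually_lt_const hc', eventually_gt_atTop 0] with r hr hr₀
  calc c * r ^ a = c * r ^ (-(b - a)) * r ^ b := by
        rw [mul_assoc, ← Real.rpow_add hr₀]
        ring_nf
    _ < c' * r ^ b := by gcongr

theorem laplacian_norm_rpow_add_const_mul (s t c : ℝ) (hx : x ≠ 0) :
    Δ (fun y : E => ‖y‖ ^ s + c * ‖y‖ ^ t) x =
      s * (s + finrank ℝ E - 2) * ‖x‖ ^ (s - 2) +
        c * (t * (t + finrank ℝ E - 2)) * ‖x‖ ^ (t - 2) := by
  rw [mul_assoc c, ← laplacian_norm_rpow s hx, ← laplacian_norm_rpow t hx]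
  exact laplacian_add_const_smul c (contDiffAt_norm_rpow s hx) (contDiffAt_norm_rpow t hx)

theorem abs_rpow_add_const_mul_rpow_le {r s t : ℝ} (c : ℝ) (hr : 1 ≤ r) (hts : t ≤ s) :
    |r ^ s + c * r ^ t| ≤ (1 + |c|) * r ^ s := by
  have hle : r ^ t ≤ r ^ s := Real.rpow_le_rpow_of_exponent_le hr hts
  calc |r ^ s + c * r ^ t| ≤ |r ^ s| + |c * r ^ t| := abs_add_le _ _
    _ = r ^ s + |c| * r ^ t := by
        rw [abs_mul, abs_of_nonneg (a := r ^ s) (by positivity),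
          abs_of_nonneg (a := r ^ t) (by positivity)]
    _ ≤ r ^ s + |c| * r ^ s := by gcongr
    _ = (1 + |c|) * r ^ s := by ring

theorem eventually_mul_lt_neg_laplacian_norm_rpow_add {s t c α : ℝ} (B : ℝ)
    (hs : s * (s + finrank ℝ E - 2) = 0) (hts : t ≤ s) (hα : s - α < t)
    (hc : c * (t * (t + finrank ℝ E - 2)) < 0) :
    ∀ᶠ x in cocompact E, B * ‖x‖ ^ (-2 - α) * (‖x‖ ^ s + c * ‖x‖ ^ t) <
      -Δ (fun y : E => ‖y‖ ^ s + c * ‖y‖ ^ t) x := by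
  have hlead := eventually_const_mul_rpow_lt_const_mul_rpow (c := |B| * (1 + |c|))
    (show s - 2 - α < t - 2 by linarith) (neg_pos.2 hc)
  filter_upwards [(tendsto_norm_cocompact_atTop (E := E)).eventually
    (hlead.and (eventually_ge_atTop 1))] with x ⟨hlt, hx⟩
  have hx₀ : 0 < ‖x‖ := one_pos.trans_le hx
  calc B * ‖x‖ ^ (-2 - α) * (‖x‖ ^ s + c * ‖x‖ ^ t)
      ≤ |B| * ‖x‖ ^ (-2 - α) * |‖x‖ ^ s + c * ‖x‖ ^ t| := by
        refine (le_abs_self _).trans_eq ?_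
        rw [abs_mul, abs_mul, abs_of_nonneg (a := ‖x‖ ^ (-2 - α)) (by positivity)]
    _ ≤ |B| * ‖x‖ ^ (-2 - α) * ((1 + |c|) * ‖x‖ ^ s) := by
        gcongr
        exact abs_rpow_add_const_mul_rpow_le c hx hts
    _ = |B| * (1 + |c|) * ‖x‖ ^ (s - 2 - α) := by
        rw [show s - 2 - α = -2 - α + s by ring, Real.rpow_add hx₀]
        ring
    _ < -(c * (t * (t + finrank ℝ E - 2))) * ‖x‖ ^ (t - 2) := hlt
    _ = -Δ (fun y : E => ‖y‖ ^ s + c * ‖y‖ ^ t) x := by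
        rw [laplacian_norm_rpow_add_const_mul s t c (norm_pos_iff.1 hx₀), hs]
        ring

end NormRpow

section Comparison

open InnerProductSpace
open scoped Laplacian

theorem exists_forall_norm_ge_of_eventually_cocompact {E : Type*} [NormedAddCommGroup E]
    [ProperSpace E] {p : E → Prop} (hp : ∀ᶠ x in cocompact E, p x) :
    ∃ R, ∀ x, R ≤ ‖x‖ → p x := by
  rw [← Metric.cobounded_eq_cocompact, hasBasis_cobounded_norm.eventually_iff] at hp
  simpa using hp

variable {E : Type*} [NormedAddCommGroup E] [InnerProductSpace ℝ E] [FiniteDimensional ℝ E]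

theorem nonpos_of_strict_supersolution {S : Set E} {v w k : E → ℝ} (hS : IsClosed S)
    (hv : ∀ x ∈ S, ContDiffAt ℝ 2 v x) (hw : ∀ x ∈ S, ContDiffAt ℝ 2 w x)
    (hw₁ : ∀ x ∈ S, 1 ≤ w x) (hsub : ∀ x ∈ S, -Δ v x ≤ k x * v x)
    (hsuper : ∀ x ∈ S, k x * w x < -Δ w x) (hfront : ∀ x ∈ frontier S, v x ≤ 0)
    (hinf : ∀ ε > 0, ∀ᶠ x in cocompact E ⊓ 𝓟 S, v x < ε) : ∀ x ∈ S, v x ≤ 0 := by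
  by_contra! ⟨x₀, hx₀S, hx₀⟩
  have hwpos (x) (hx : x ∈ S) : 0 < w x := one_pos.trans_le (hw₁ x hx)
  have hquot₀ : 0 < v x₀ / w x₀ := div_pos hx₀ (hwpos x₀ hx₀S)
  have hquot_inf : ∀ᶠ x in cocompact E ⊓ 𝓟 S, v x / w x ≤ v x₀ / w x₀ := by
    filter_upwards [hinf _ hquot₀, mem_inf_of_right (mem_principal_self S)] with x hx hxS
    rw [div_le_iff₀ (hwpos x hxS)]
    exact hx.le.trans (le_mul_of_one_le_right hquot₀.le (hw₁ x hxS))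
  have hquot_cont : ContinuousOn (fun x => v x / w x) S := fun x hx =>
    ((hv x hx).continuousAt.div (hw x hx).continuousAt (hwpos x hx).ne').continuousWithinAt
  obtain ⟨a, haS, hamax⟩ := hquot_cont.exists_isMaxOn' hS hx₀S hquot_inf
  set m := v a / w a
  have hm : 0 < m := hquot₀.trans_le (hamax hx₀S)
  have hva : v a = m * w a := (div_mul_cancel₀ _ (hwpos a haS).ne').symm
  have ha : S ∈ 𝓝 a := by
    rw [← mem_interior_iff_mem_nhds, ← self_sdiff_frontier]
    exact ⟨haS, fun hafront => (hfront a hafront).not_gt (hva ▸ mul_pos hm (hwpos a haS))⟩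
  have hlocal : IsLocalMax (v + (-m) • w) a := by
    filter_upwards [ha] with x hx
    have hle : v x ≤ m * w x := (div_le_iff₀ (hwpos x hx)).1 (hamax hx)
    simpa [hva] using hle
  have hΔ : Δ (v + (-m) • w) a = Δ v a - m * Δ w a := by
    rw [laplacian_add_const_smul (-m) (hv a haS) (hw a haS), neg_mul, sub_eq_add_neg]
  have hΔ_nonpos : Δ (v + (-m) • w) a ≤ 0 :=
    laplacian_nonpos_of_isLocalMax ((hv a haS).add ((hw a haS).const_smul (-m))) hlocal
  have hΔ_pos : 0 < Δ (v + (-m) • w) a :=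
    calc 0 < m * (-Δ w a - k a * w a) := mul_pos hm (sub_pos.2 (hsuper a haS))
      _ = k a * -v a - m * Δ w a := by rw [hva]; ring
      _ ≤ Δ v a - m * Δ w a := by linarith [hsub a haS]
      _ = Δ (v + (-m) • w) a := hΔ.symm
  exact hΔ_nonpos.not_gt hΔ_pos

theorem subsolution_le_supersolution {S : Set E} {u w w₂ k : E → ℝ} (hS : IsClosed S)
    (hu : ∀ x ∈ S, ContDiffAt ℝ 2 u x) (hw : ∀ x ∈ S, ContDiffAt ℝ 2 w x)
    (hw₂ : ∀ x ∈ S, ContDiffAt ℝ 2 w₂ x) (hw₂one : ∀ x ∈ S, 1 ≤ w₂ x)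
    (hsub : ∀ x ∈ S, -Δ u x ≤ k x * u x) (hsuper : ∀ x ∈ S, k x * w x ≤ -Δ w x)
    (hsuper₂ : ∀ x ∈ S, k x * w₂ x < -Δ w₂ x) (hfront : ∀ x ∈ frontier S, u x ≤ w x)
    (hinf : ∀ ε > 0, ∀ᶠ x in cocompact E ⊓ 𝓟 S, u x < w x + ε) : ∀ x ∈ S, u x ≤ w x := by
  have hv (x) (hx : x ∈ S) : ContDiffAt ℝ 2 (u + (-1 : ℝ) • w) x :=
    (hu x hx).add ((hw x hx).const_smul (-1 : ℝ))
  have hnonpos := nonpos_of_strict_supersolution (v := u + (-1 : ℝ) • w) (k := k) hS hv hw₂ hw₂one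
    (fun x hx => ?_) hsuper₂ (by simpa using hfront)
    (by simpa [← sub_eq_add_neg, sub_lt_iff_lt_add'] using hinf)
  · simpa [← sub_eq_add_neg] using hnonpos
  · rw [laplacian_add_const_smul (-1) (hu x hx) (hw x hx)]
    simp only [Pi.add_apply, Pi.smul_apply, smul_eq_mul]
    linarith [hsub x hx, hsuper x hx]

theorem exists_eventually_le_const_mul_of_supersolution {u w w₂ k : E → ℝ}
    (hu : ∀ᶠ x in cocompact E, ContDiffAt ℝ 2 u x) (hw : ∀ᶠ x in cocompact E, ContDiffAt ℝ 2 w x)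
    (hw₂ : ∀ᶠ x in cocompact E, ContDiffAt ℝ 2 w₂ x) (hwpos : ∀ᶠ x in cocompact E, 0 < w x)
    (hw₂one : ∀ᶠ x in cocompact E, 1 ≤ w₂ x) (hsub : ∀ᶠ x in cocompact E, -Δ u x ≤ k x * u x)
    (hsuper : ∀ᶠ x in cocompact E, k x * w x ≤ -Δ w x)
    (hsuper₂ : ∀ᶠ x in cocompact E, k x * w₂ x < -Δ w₂ x)
    (hlim : Tendsto u (cocompact E) (𝓝 0)) :
    ∃ C, 0 ≤ C ∧ ∀ᶠ x in cocompact E, u x ≤ C * w x := by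
  obtain ⟨R, hR⟩ := exists_forall_norm_ge_of_eventually_cocompact
    (hu.and <| hw.and <| hw₂.and <| hwpos.and <| hw₂one.and <| hsub.and <| hsuper.and hsuper₂)
  choose! hu hw hw₂ hwpos hw₂one hsub hsuper hsuper₂ using hR
  obtain ⟨M, hM⟩ := (isCompact_sphere (0 : E) R).exists_bound_of_continuousOn
    (f := fun x => u x / w x) fun x hx => by
      have hx : R ≤ ‖x‖ := (mem_sphere_zero_iff_norm.1 hx).ge
      exact ((hu x hx).continuousAt.div (hw x hx).continuousAt (hwpos x hx).ne').continuousWithinAt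
  set C := max M 0
  have hC : 0 ≤ C := le_max_right _ _
  have hnorm {x : E} (hx : x ∈ (ball 0 R)ᶜ) : R ≤ ‖x‖ := by simpa using hx
  have hle : ∀ x ∈ (ball (0 : E) R)ᶜ, u x ≤ (C • w) x := by
    refine subsolution_le_supersolution (k := k) (w₂ := w₂) isOpen_ball.isClosed_compl
      (fun x hx => hu x (hnorm hx)) (fun x hx => (hw x (hnorm hx)).const_smul C)
      (fun x hx => hw₂ x (hnorm hx)) (fun x hx => hw₂one x (hnorm hx))
      (fun x hx => hsub x (hnorm hx)) (fun x hx => ?_) (fun x hx => hsuper₂ x (hnorm hx))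
      (fun x hx => ?_) (fun ε hε => ?_)
    · calc k x * (C * w x) = C * (k x * w x) := mul_left_comm ..
        _ ≤ C * -Δ w x := mul_le_mul_of_nonneg_left (hsuper x (hnorm hx)) hC
        _ = -Δ (C • w) x := by rw [laplacian_smul C (hw x (hnorm hx)), smul_eq_mul, mul_neg]
    · rw [frontier_compl] at hx
      have hxR : ‖x‖ = R := mem_sphere_zero_iff_norm.1 (frontier_ball_subset_sphere hx)
      have hquot : u x / w x ≤ C :=
        (le_abs_self _).trans ((hM x (by simpa using hxR)).trans (le_max_left _ _))
      exact (div_le_iff₀ (hwpos x hxR.ge)).1 hquot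
    · filter_upwards [(hlim.eventually_lt_const hε).filter_mono inf_le_left,
        mem_inf_of_right (mem_principal_self _)] with x hux hx
      exact hux.trans_le (le_add_of_nonneg_left (mul_nonneg hC (hwpos x (hnorm hx)).le))
  refine ⟨C, hC, ?_⟩
  filter_upwards [(tendsto_norm_cocompact_atTop (E := E)).eventually_ge_atTop R] with x hx
  exact hle x (by simpa using hx)

end Comparison

section Decay

open Module Asymptotics
open scoped Laplacian

variable {E : Type*} [NormedAddCommGroup E] [InnerProductSpace ℝ E] [FiniteDimensional ℝ E]

theorem exists_eventually_le_norm_rpow_of_subsolution {u : E → ℝ} {α B : ℝ}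
    (hd : 2 < finrank ℝ E) (hα : 0 < α) (hu : ContDiff ℝ 2 u)
    (hsub : ∀ᶠ x in cocompact E, -Δ u x ≤ B * ‖x‖ ^ (-2 - α) * u x)
    (hlim : Tendsto u (cocompact E) (𝓝 0)) :
    ∃ C, 0 ≤ C ∧ ∀ᶠ x in cocompact E, u x ≤ C * ‖x‖ ^ (2 - finrank ℝ E : ℝ) := by
  set s : ℝ := 2 - finrank ℝ E
  have hs : s < 0 := sub_neg.2 (by exact_mod_cast hd)
  have hsum : (finrank ℝ E : ℝ) - 2 = -s := (neg_sub _ _).symm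
  obtain ⟨γ, hγ, hγα⟩ := exists_between (lt_min hα (neg_pos.2 hs))
  obtain ⟨hγα, hγs⟩ := lt_min_iff.1 hγα
  have hsuper := eventually_mul_lt_neg_laplacian_norm_rpow_add (E := E) (s := s) (t := s - γ)
    (c := -1) (α := α) B (by rw [add_sub_assoc, hsum]; ring) (by linarith) (by linarith)
    (by rw [add_sub_assoc, hsum]; nlinarith)
  have hsuper₂ := eventually_mul_lt_neg_laplacian_norm_rpow_add (E := E) (s := 0) (t := -γ)
    (c := 1) (α := α) B (zero_mul _) (by linarith) (by linarith)
    (by rw [add_sub_assoc, hsum]; nlinarith)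
  have hlarge : ∀ᶠ x in cocompact E, 1 < ‖x‖ :=
    (tendsto_norm_cocompact_atTop (E := E)).eventually_gt_atTop 1
  have hsmooth (a b c : ℝ) : ∀ᶠ x in cocompact E,
      ContDiffAt ℝ 2 (fun y : E => ‖y‖ ^ a + c * ‖y‖ ^ b) x := by
    filter_upwards [hlarge] with x hx
    have hne : x ≠ 0 := norm_pos_iff.1 (one_pos.trans hx)
    exact (contDiffAt_norm_rpow a hne).add (contDiffAt_const.mul (contDiffAt_norm_rpow b hne))
  have hwpos : ∀ᶠ x : E in cocompact E, 0 < ‖x‖ ^ s + -1 * ‖x‖ ^ (s - γ) := by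
    filter_upwards [hlarge] with x hx
    have : ‖x‖ ^ (s - γ) < ‖x‖ ^ s := Real.rpow_lt_rpow_of_exponent_lt hx (by linarith)
    linarith
  have hw₂one : ∀ᶠ x : E in cocompact E, 1 ≤ ‖x‖ ^ (0 : ℝ) + 1 * ‖x‖ ^ (-γ) := by
    refine .of_forall fun x => ?_
    rw [Real.rpow_zero, one_mul]
    exact le_add_of_nonneg_right (by positivity)
  obtain ⟨C, hC, hle⟩ := exists_eventually_le_const_mul_of_supersolution
    (.of_forall fun _ => hu.contDiffAt) (hsmooth ..) (hsmooth ..) hwpos hw₂one hsub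
    (hsuper.mono fun _ => le_of_lt) hsuper₂ hlim
  refine ⟨C, hC, ?_⟩
  filter_upwards [hle] with x hx
  refine hx.trans (mul_le_mul_of_nonneg_left ?_ hC)
  have : 0 ≤ ‖x‖ ^ (s - γ) := by positivity
  linarith

-- Below dimension three the exponent `finrank ℝ E - 2` truncates to `0`, so the bound is `O(1)`.
theorem isBigO_inv_norm_pow_of_subsolution {u : E → ℝ} {α B : ℝ} (hα : 0 < α)
    (hu : ContDiff ℝ 2 u) (hu₀ : ∀ x, 0 ≤ u x)
    (hsub : ∀ᶠ x in cocompact E, -Δ u x ≤ B * ‖x‖ ^ (-2 - α) * u x)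
    (hlim : Tendsto u (cocompact E) (𝓝 0)) :
    u =O[cocompact E] fun x => (‖x‖ ^ (finrank ℝ E - 2))⁻¹ := by
  rcases le_or_gt (finrank ℝ E) 2 with hd | hd
  · simpa [Nat.sub_eq_zero_of_le hd] using hlim.isBigO_one ℝ
  · obtain ⟨C, -, hle⟩ := exists_eventually_le_norm_rpow_of_subsolution hd hα hu hsub hlim
    refine IsBigO.of_bound C ?_
    filter_upwards [hle] with x hx
    have hpow : ‖x‖ ^ (2 - finrank ℝ E : ℝ) = (‖x‖ ^ (finrank ℝ E - 2))⁻¹ := by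
      rw [← neg_sub, Real.rpow_neg (norm_nonneg x), ← Nat.cast_two, ← Nat.cast_sub hd.le,
        Real.rpow_natCast]
    rw [Real.norm_of_nonneg (hu₀ x), Real.norm_of_nonneg (by positivity), ← hpow]
    exact hx

end Decay

section Integrability

open Module Asymptotics

variable {E : Type*} [NormedAddCommGroup E] [NormedSpace ℝ E] [FiniteDimensional ℝ E]
  [MeasurableSpace E] [BorelSpace E] {μ : Measure E}

theorem integrable_of_eventually_integral_comp_inv_smul_mul_le {g φ : E → ℝ} {C : ℝ}
    (hg : LocallyIntegrable g μ) (hg₀ : 0 ≤ g) (hφ : Continuous φ) (hsupp : HasCompactSupport φ)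
    (hφ₀ : 0 ≤ φ) (hφ₁ : φ =ᶠ[𝓝 0] 1)
    (hC : ∀ᶠ R : ℝ in atTop, ∫ x, φ (R⁻¹ • x) * g x ∂μ ≤ C) : Integrable g μ := by
  obtain ⟨δ, hδ, hφδ⟩ := Metric.nhds_basis_closedBall.eventually_iff.1 hφ₁
  have hcover : AECover μ atTop fun R : ℝ => closedBall (0 : E) (R * δ) :=
    aecover_closedBall (tendsto_id.atTop_mul_const hδ)
  refine hcover.integrable_of_integral_bounded_of_nonneg_ae C
    (fun R => hg.integrableOn_isCompact (isCompact_closedBall 0 _)) (ae_of_all _ hg₀) ?_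
  filter_upwards [hC, eventually_gt_atTop 0] with R hCR hR
  have hint : Integrable (fun x => φ (R⁻¹ • x) * g x) μ :=
    hg.integrable_smul_left_of_hasCompactSupport (hφ.comp (continuous_const_smul _))
      (hsupp.comp_smul (inv_ne_zero hR.ne'))
  have hone {x : E} (hx : x ∈ closedBall 0 (R * δ)) : φ (R⁻¹ • x) = 1 := by
    refine hφδ ?_
    rw [mem_closedBall_zero_iff] at hx ⊢
    rwa [norm_smul, norm_inv, Real.norm_of_nonneg hR.le, inv_mul_eq_div, div_le_iff₀' hR]
  calc ∫ x in closedBall 0 (R * δ), g x ∂μ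
      = ∫ x in closedBall 0 (R * δ), φ (R⁻¹ • x) * g x ∂μ :=
        setIntegral_congr_fun isClosed_closedBall.measurableSet fun x hx => by
          simp only [hone hx, one_mul]
    _ ≤ ∫ x, φ (R⁻¹ • x) * g x ∂μ :=
        setIntegral_le_integral hint (ae_of_all _ fun x => mul_nonneg (hφ₀ _) (hg₀ x))
    _ ≤ C := hCR

variable [μ.IsAddHaarMeasure]

theorem integrable_of_isBigO_norm_rpow_neg {g : E → ℝ} {r : ℝ}
    (hg : LocallyIntegrable g μ) (hr : finrank ℝ E < r)
    (hO : g =O[cocompact E] fun x => ‖x‖ ^ (-r)) : Integrable g μ := by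
  have hcompare : (fun x : E => ‖x‖ ^ (-r)) =O[cocompact E] fun x => (1 + ‖x‖) ^ (-r) := by
    refine IsBigO.of_bound (2 ^ r) ?_
    filter_upwards [(tendsto_norm_cocompact_atTop (E := E)).eventually_ge_atTop 1] with x hx
    have hx₀ : 0 < ‖x‖ := one_pos.trans_le hx
    have hr₀ : 0 ≤ r := (Nat.cast_nonneg _).trans hr.le
    rw [Real.norm_of_nonneg (by positivity), Real.norm_of_nonneg (by positivity),
      Real.rpow_neg hx₀.le, Real.rpow_neg (by positivity), ← div_eq_mul_inv,
      ← Real.div_rpow (by positivity) (by positivity), ← Real.inv_rpow hx₀.le]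
    refine Real.rpow_le_rpow (by positivity) ?_ hr₀
    rw [inv_le_comm₀ hx₀ (by positivity), inv_div]
    linarith
  exact hg.integrable_of_isBigO_cocompact (hO.trans hcompare)
    ((integrable_one_add_norm hr).integrableAtFilter _)

theorem isBigO_integral_comp_inv_smul_mul {ψ u : E → ℝ} {p : ℕ} (hψ : Integrable ψ μ)
    (hψ₀ : ψ =ᶠ[𝓝 0] 0) (hu : u =O[cocompact E] fun x => (‖x‖ ^ p)⁻¹) :
    (fun R : ℝ => ∫ x, ψ (R⁻¹ • x) * u x ∂μ) =O[atTop]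
      fun R => R ^ finrank ℝ E * (R ^ p)⁻¹ := by
  obtain ⟨C, hC, hbound⟩ := hu.exists_nonneg
  obtain ⟨ρ, hρ⟩ := exists_forall_norm_ge_of_eventually_cocompact hbound.bound
  obtain ⟨δ, hδ, hψδ⟩ := Metric.eventually_nhds_iff.1 hψ₀
  refine IsBigO.of_bound (C * (δ ^ p)⁻¹ * ∫ x, ‖ψ x‖ ∂μ) ?_
  filter_upwards [eventually_gt_atTop 0, eventually_ge_atTop (ρ / δ)] with R hR hρR
  have hpoint (x : E) : ‖ψ (R⁻¹ • x) * u x‖ ≤ C * ((R * δ) ^ p)⁻¹ * ‖ψ (R⁻¹ • x)‖ := by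
    rw [norm_mul, mul_comm]
    rcases lt_or_ge ‖R⁻¹ • x‖ δ with hx | hx
    · simp [hψδ (by simpa using hx)]
    · have hRx : R * δ ≤ ‖x‖ := by
        rwa [norm_smul, norm_inv, Real.norm_of_nonneg hR.le, inv_mul_eq_div,
          le_div_iff₀' hR] at hx
      have hux : ‖u x‖ ≤ C * ((R * δ) ^ p)⁻¹ := by
        refine (hρ x (((div_le_iff₀ hδ).1 hρR).trans hRx)).trans ?_
        rw [norm_inv, norm_pow, norm_norm]
        gcongr
      gcongr
  calc ‖∫ x, ψ (R⁻¹ • x) * u x ∂μ‖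
      ≤ ∫ x, C * ((R * δ) ^ p)⁻¹ * ‖ψ (R⁻¹ • x)‖ ∂μ :=
        norm_integral_le_of_norm_le ((hψ.comp_smul (inv_ne_zero hR.ne')).norm.const_mul _)
          (ae_of_all _ hpoint)
    _ = C * (δ ^ p)⁻¹ * (∫ x, ‖ψ x‖ ∂μ) * ‖R ^ finrank ℝ E * (R ^ p)⁻¹‖ := by
        rw [integral_const_mul, Measure.integral_comp_inv_smul_of_nonneg μ (fun y => ‖ψ y‖) hR.le,
          Real.norm_of_nonneg (by positivity), mul_pow, mul_inv, smul_eq_mul]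
        ring

theorem integral_mul_fderiv_eq_neg_of_hasCompactSupport {u φ : E → ℝ} (hu : ContDiff ℝ 1 u)
    (hφ : ContDiff ℝ 1 φ) (hsupp : HasCompactSupport φ) (v : E) :
    ∫ x, φ x * fderiv ℝ u x v ∂μ = -∫ x, fderiv ℝ φ x v * u x ∂μ := by
  have hφ' : Continuous fun x => fderiv ℝ φ x v :=
    (hφ.continuous_fderiv one_ne_zero).clm_apply continuous_const
  have hu' : Continuous fun x => fderiv ℝ u x v :=
    (hu.continuous_fderiv one_ne_zero).clm_apply continuous_const
  exact integral_mul_fderiv_eq_neg_fderiv_mul_of_integrable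
    ((hφ'.mul hu.continuous).integrable_of_hasCompactSupport (hsupp.fderiv_apply ℝ v).mul_right)
    ((hφ.continuous.mul hu').integrable_of_hasCompactSupport hsupp.mul_right)
    ((hφ.continuous.mul hu.continuous).integrable_of_hasCompactSupport hsupp.mul_right)
    (fun x _ => hφ.differentiable one_ne_zero x) (fun x _ => hu.differentiable one_ne_zero x)

end Integrability

section Green

open InnerProductSpace Module Asymptotics
open scoped Laplacian

variable {E : Type*} [NormedAddCommGroup E] [InnerProductSpace ℝ E] [FiniteDimensional ℝ E]
  [MeasurableSpace E] [BorelSpace E] {μ : Measure E} [μ.IsAddHaarMeasure]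

theorem integral_mul_laplacian_eq_integral_laplacian_mul {u φ : E → ℝ} (hu : ContDiff ℝ 2 u)
    (hφ : ContDiff ℝ 2 φ) (hsupp : HasCompactSupport φ) :
    ∫ x, φ x * Δ u x ∂μ = ∫ x, Δ φ x * u x ∂μ := by
  have hpartial {g : E → ℝ} (hg : ContDiff ℝ 2 g) (v : E) :
      ContDiff ℝ 1 fun x => fderiv ℝ g x v :=
    (hg.fderiv_right (by norm_num)).clm_apply contDiff_const
  have hpartial₂ {g : E → ℝ} (hg : ContDiff ℝ 2 g) (v : E) :
      Continuous fun x => fderiv ℝ (fun y => fderiv ℝ g y v) x v :=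
    ((hpartial hg v).continuous_fderiv one_ne_zero).clm_apply continuous_const
  simp only [laplacian_eq_sum_fderiv_fderiv (stdOrthonormalBasis ℝ E) hu.contDiffAt,
    laplacian_eq_sum_fderiv_fderiv (stdOrthonormalBasis ℝ E) hφ.contDiffAt, Finset.mul_sum,
    Finset.sum_mul]
  rw [integral_finsetSum _ fun i _ => ?_, integral_finsetSum _ fun i _ => ?_]
  · refine Finset.sum_congr rfl fun i _ => ?_
    set e := stdOrthonormalBasis ℝ E i
    calc ∫ x, φ x * fderiv ℝ (fun y => fderiv ℝ u y e) x e ∂μ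
        = -∫ x, fderiv ℝ φ x e * fderiv ℝ u x e ∂μ :=
          integral_mul_fderiv_eq_neg_of_hasCompactSupport (hpartial hu e)
            (hφ.of_le one_le_two) hsupp e
      _ = ∫ x, fderiv ℝ (fun y => fderiv ℝ φ y e) x e * u x ∂μ := by
          rw [integral_mul_fderiv_eq_neg_of_hasCompactSupport (hu.of_le one_le_two)
            (hpartial hφ e) (hsupp.fderiv_apply ℝ e) e, neg_neg]
  · exact ((hpartial₂ hφ _).mul hu.continuous).integrable_of_hasCompactSupport
      ((hsupp.fderiv_apply ℝ _).fderiv_apply ℝ _).mul_right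
  · exact (hφ.continuous.mul (hpartial₂ hu _)).integrable_of_hasCompactSupport hsupp.mul_right

theorem isBigO_integral_laplacian_comp_inv_smul_mul {φ u : E → ℝ} (hφ : ContDiff ℝ 2 φ)
    (hsupp : HasCompactSupport φ) (hφ₁ : φ =ᶠ[𝓝 0] 1)
    (hu : u =O[cocompact E] fun x => (‖x‖ ^ (finrank ℝ E - 2))⁻¹) :
    (fun R : ℝ => ∫ x, Δ (fun y => φ (R⁻¹ • y)) x * u x ∂μ) =O[atTop] fun _ => (1 : ℝ) := by
  have hΔ₀ : Δ φ =ᶠ[𝓝 0] 0 := by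
    filter_upwards [hφ₁.eventuallyEq_nhds] with x hx
    rw [(laplacian_congr_nhds hx).eq_of_nhds]
    exact congrFun laplacian_const x
  have hΔint : Integrable (Δ φ) μ :=
    (continuous_laplacian hφ).integrable_of_hasCompactSupport (hasCompactSupport_laplacian hsupp)
  have hscaled : (fun R : ℝ => ∫ x, Δ (fun y => φ (R⁻¹ • y)) x * u x ∂μ) =
      fun R => (R⁻¹) ^ 2 * ∫ x, Δ φ (R⁻¹ • x) * u x ∂μ := by
    ext R
    simp only [laplacian_comp_const_smul _ hφ, mul_assoc, integral_const_mul]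
  rw [hscaled]
  refine ((isBigO_refl _ _).mul (isBigO_integral_comp_inv_smul_mul hΔint hΔ₀ hu)).trans ?_
  refine IsBigO.of_bound 1 ?_
  filter_upwards [eventually_ge_atTop 1] with R hR
  have : 0 < R := one_pos.trans_le hR
  have hpow : R ^ finrank ℝ E ≤ R ^ 2 * R ^ (finrank ℝ E - 2) := by
    rw [← pow_add]
    exact pow_le_pow_right₀ hR (by omega)
  rw [Real.norm_of_nonneg (by positivity), norm_one, one_mul, inv_pow, mul_left_comm, ← mul_inv]
  exact mul_inv_le_one_of_le₀ hpow (by positivity)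

theorem integrable_laplacian_of_neg_le {u h : E → ℝ} (hu : ContDiff ℝ 2 u)
    (huO : u =O[cocompact E] fun x => (‖x‖ ^ (finrank ℝ E - 2))⁻¹) (hh : Integrable h μ)
    (hle : ∀ x, -h x ≤ Δ u x) : Integrable (Δ u) μ := by
  have hΔ : LocallyIntegrable (Δ u) μ := (continuous_laplacian hu).locallyIntegrable
  let φ : ContDiffBump (0 : E) := ⟨1, 2, one_pos, one_lt_two⟩
  obtain ⟨C, hC⟩ := (isBigO_integral_laplacian_comp_inv_smul_mul (μ := μ) φ.contDiff
    φ.hasCompactSupport φ.eventuallyEq_one huO).bound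
  suffices hsum : Integrable (h + Δ u) μ by simpa using hsum.sub hh
  refine integrable_of_eventually_integral_comp_inv_smul_mul_le (C := (∫ x, ‖h x‖ ∂μ) + C)
    (hh.locallyIntegrable.add hΔ) (fun x => neg_le_iff_add_nonneg'.1 (hle x)) φ.continuous
    φ.hasCompactSupport (fun _ => φ.nonneg) φ.eventuallyEq_one ?_
  filter_upwards [hC, eventually_gt_atTop 0] with R hCR hR
  set φR : E → ℝ := fun x => φ (R⁻¹ • x)
  have hφR : ContDiff ℝ 2 φR := φ.contDiff.comp (contDiff_const_smul _)
  have hsupp : HasCompactSupport φR := φ.hasCompactSupport.comp_smul (inv_ne_zero hR.ne')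
  have hφh : Integrable (fun x => φR x * h x) μ :=
    hh.locallyIntegrable.integrable_smul_left_of_hasCompactSupport hφR.continuous hsupp
  have hφΔ : Integrable (fun x => φR x * Δ u x) μ :=
    hΔ.integrable_smul_left_of_hasCompactSupport hφR.continuous hsupp
  calc ∫ x, φR x * (h x + Δ u x) ∂μ
      = (∫ x, φR x * h x ∂μ) + ∫ x, Δ φR x * u x ∂μ := by
        rw [← integral_mul_laplacian_eq_integral_laplacian_mul hu hφR hsupp,
          ← integral_add hφh hφΔ]
        simp only [mul_add]
    _ ≤ (∫ x, ‖h x‖ ∂μ) + C := by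
        refine add_le_add (integral_mono hφh hh.norm fun x => ?_) ?_
        · exact (mul_le_mul_of_nonneg_left (le_abs_self _) φ.nonneg).trans
            (mul_le_of_le_one_left (abs_nonneg _) φ.le_one)
        · exact (le_abs_self _).trans (by simpa using hCR)

end Green

section Logistic

open Module
open scoped Laplacian

variable {E : Type*} [NormedAddCommGroup E] [InnerProductSpace ℝ E] [FiniteDimensional ℝ E]

theorem isBigO_inv_norm_pow_of_logistic {V u : E → ℝ} {f : ℝ → ℝ} {α lam : ℝ} (hα : 0 < α)
    (hdec : (fun x => max (V x) 0) =O[cocompact E] fun x => ‖x‖ ^ (-2 - α))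
    (hf : ∀ t, 0 ≤ t → 0 ≤ f t) (hlam : 0 ≤ lam) (hu : ContDiff ℝ 2 u) (hu₀ : ∀ x, 0 ≤ u x)
    (heqn : ∀ x, -Δ u x = lam * (V x * u x - f (u x))) (hlim : Tendsto u (cocompact E) (𝓝 0)) :
    u =O[cocompact E] fun x => (‖x‖ ^ (finrank ℝ E - 2))⁻¹ := by
  obtain ⟨A, hA⟩ := hdec.bound
  refine isBigO_inv_norm_pow_of_subsolution (B := lam * A) hα hu hu₀ ?_ hlim
  filter_upwards [hA] with x hx
  have hVx : V x ≤ A * ‖x‖ ^ (-2 - α) := by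
    rw [Real.norm_of_nonneg (le_max_right _ _), Real.norm_of_nonneg (by positivity)] at hx
    exact (le_max_left _ _).trans hx
  calc -Δ u x = lam * (V x * u x - f (u x)) := heqn x
    _ ≤ lam * (A * ‖x‖ ^ (-2 - α) * u x) := by
        gcongr
        exact (sub_le_self _ (hf _ (hu₀ x))).trans (mul_le_mul_of_nonneg_right hVx (hu₀ x))
    _ = lam * A * ‖x‖ ^ (-2 - α) * u x := by ring

variable [MeasurableSpace E] [BorelSpace E] {μ : Measure E} [μ.IsAddHaarMeasure]

theorem integrable_mul_of_isBigO_inv_norm_pow {W u : E → ℝ} {α : ℝ} (hα : 0 < α)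
    (hW : LocallyIntegrable W μ) (hu : Continuous u)
    (hWO : W =O[cocompact E] fun x => ‖x‖ ^ (-2 - α))
    (huO : u =O[cocompact E] fun x => (‖x‖ ^ (finrank ℝ E - 2))⁻¹) :
    Integrable (fun x => W x * u x) μ := by
  have hd : (finrank ℝ E : ℝ) ≤ 2 + (finrank ℝ E - 2 : ℕ) := by
    exact_mod_cast le_add_tsub
  refine integrable_of_isBigO_norm_rpow_neg (r := 2 + α + (finrank ℝ E - 2 : ℕ))
    (hW.mul_continuous hu) (by linarith) ((hWO.mul huO).congr' .rfl ?_)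
  filter_upwards [(tendsto_norm_cocompact_atTop (E := E)).eventually_gt_atTop 0] with x hx
  rw [← Real.rpow_natCast, ← Real.rpow_neg hx.le, ← Real.rpow_add hx]
  ring_nf

theorem stmt9_general (μ : Measure E) [μ.IsAddHaarMeasure] {V u : E → ℝ} {f : ℝ → ℝ}
    {α lam : ℝ} (hV : LocallyIntegrable V μ) (hα : 0 < α)
    (hdec : (fun x => max (V x) 0) =O[cocompact E] fun x => ‖x‖ ^ (-2 - α))
    (hf : ∀ t, 0 ≤ t → 0 ≤ f t) (hlam : 0 < lam) (hu : ContDiff ℝ 2 u) (hu₀ : ∀ x, 0 ≤ u x)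
    (heqn : ∀ x, -Δ u x = lam * (V x * u x - f (u x)))
    (hlim : Tendsto u (cocompact E) (𝓝 0)) :
    Integrable (fun x => max (V x) 0 * u x) μ ∧ Integrable (fun x => max (-V x) 0 * u x) μ ∧
      Integrable (fun x => f (u x)) μ := by
  have hVpos_loc : LocallyIntegrable (fun x => max (V x) 0) μ :=
    hV.mono (hV.aestronglyMeasurable.sup aestronglyMeasurable_const)
      (ae_of_all _ fun x => abs_max_le_max_abs_abs.trans_eq (by simp))
  have huO := isBigO_inv_norm_pow_of_logistic hα hdec hf hlam.le hu hu₀ heqn hlim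
  have hpos := integrable_mul_of_isBigO_inv_norm_pow hα hVpos_loc hu.continuous hdec huO
  have hΔ : Integrable (Δ u) μ := by
    refine integrable_laplacian_of_neg_le hu huO (hpos.const_mul lam) fun x => neg_le.1 ?_
    rw [heqn x]
    gcongr
    exact (sub_le_self _ (hf _ (hu₀ x))).trans
      (mul_le_mul_of_nonneg_right (le_max_left _ _) (hu₀ x))
  have habsorb (x : E) : max (-V x) 0 * u x + f (u x) = max (V x) 0 * u x + lam⁻¹ * Δ u x := by
    have hsplit : max (V x) 0 - max (-V x) 0 = V x := max_zero_sub_max_neg_zero_eq_self (V x)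
    have hΔx : lam⁻¹ * Δ u x = f (u x) - V x * u x := by
      rw [inv_mul_eq_iff_eq_mul₀ hlam.ne']
      linarith [heqn x]
    linear_combination -u x * hsplit - hΔx
  have hsum : Integrable (fun x => max (-V x) 0 * u x + f (u x)) μ := by
    simp only [habsorb]
    exact hpos.add (hΔ.const_mul lam⁻¹)
  have hnonneg (x : E) : 0 ≤ max (-V x) 0 * u x := mul_nonneg (le_max_right _ _) (hu₀ x)
  have hneg : Integrable (fun x => max (-V x) 0 * u x) μ :=
    hsum.mono' ((hV.aestronglyMeasurable.neg.sup aestronglyMeasurable_const).mul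
      hu.continuous.aestronglyMeasurable) (ae_of_all _ fun x => by
        rw [Real.norm_of_nonneg (hnonneg x)]
        exact le_add_of_nonneg_right (hf _ (hu₀ x)))
  exact ⟨hpos, hneg, (hsum.sub hneg).congr (ae_of_all _ fun x => add_sub_cancel_left _ _)⟩

end Logistic

section Euclidean

open Asymptotics
open scoped Laplacian

theorem lap_eq_laplacian {N : ℕ} {u : Euc N → ℝ} (hu : ContDiff ℝ 2 u) : lap N u = Δ u := by
  ext x
  simp [lap, laplacian_eq_sum_fderiv_fderiv (EuclideanSpace.basisFun (Fin N) ℝ) hu.contDiffAt]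

theorem CondV.continuous {N : ℕ} {V V₁ V₂ : Euc N → ℝ} (hV : CondV N V V₁ V₂) :
    Continuous V := by
  obtain ⟨⟨_, _, hβ, -, hHolder⟩, -⟩ := hV
  exact hHolder.continuous hβ

theorem CondVDecay.exists_isBigO {N : ℕ} {V : Euc N → ℝ} (hV : CondVDecay N V) :
    ∃ α : ℝ, 0 < α ∧
      (fun x => max (V x) 0) =O[cocompact (Euc N)] fun x => ‖x‖ ^ (-2 - α) := by
  obtain ⟨A, α, -, hα, hA⟩ := hV
  refine ⟨α, hα, IsBigO.of_bound A ?_⟩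
  filter_upwards [(tendsto_norm_cocompact_atTop (E := Euc N)).eventually_gt_atTop 0] with x hx
  rw [Real.norm_of_nonneg (le_max_right _ _), Real.norm_of_nonneg (by positivity)]
  exact hA x (norm_pos_iff.1 hx)

end Euclidean

/-- for any solution `u` of `(P_λ)`, the functions `V⁺ u`, `V⁻ u` and `f(u)`
are integrable on `ℝ^N`. -/
theorem stmt9 (N : ℕ) (hN : 3 ≤ N) (V V₁ V₂ : Euc N → ℝ)
    (hV : CondV N V V₁ V₂) (hdec : CondVDecay N V)
    (f : ℝ → ℝ) (hf : CondF N V f)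
    (lam : ℝ) (hlam : 0 < lam)
    (u : Euc N → ℝ) (hu : IsSolution N V f lam u) :
    Integrable (fun x : Euc N => max (V x) 0 * u x) ∧
    Integrable (fun x : Euc N => max (-V x) 0 * u x) ∧
    Integrable (fun x : Euc N => f (u x)) := by
  obtain ⟨α, hα, hVα⟩ := hdec.exists_isBigO
  exact stmt9_general volume hV.continuous.locallyIntegrable hα hVα hf.2.1 hlam hu.smooth
    (fun x => (hu.pos x).le) (fun x => lap_eq_laplacian hu.smooth ▸ hu.eqn x) hu.decay

end
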